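/- arXiv:2002.05683 — 3 statements merged into one kernel-verified Lean document; each statement's English description precedes it below -/
import Mathlib

section
/- For all z, ẑ in ℝ^m × ℝ^n, the operator Φ is cocoercive with parameter μ/(4L²): ⟨Φ(z) − Φ(ẑ), z − ẑ⟩ ≥ (μ/(4L²)) ‖Φ(z) − Φ(ẑ)‖². -/
open MeasureTheory ProbabilityTheory Real
open scoped RealInnerProductSpace

noncomputable section

/-- Lemma 2: `Φ` is `μ/(4L²)`-cocoercive. -/
theorem stmt3 {m n : ℕ}
    (μ L : ℝ) (hμ : 0 < μ) (hμL : μ ≤ L)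
    (f : EuclideanSpace ℝ (Fin m) → EuclideanSpace ℝ (Fin n) → ℝ)
    (Fx : EuclideanSpace ℝ (Fin m) → EuclideanSpace ℝ (Fin n) → EuclideanSpace ℝ (Fin m))
    (Fy : EuclideanSpace ℝ (Fin m) → EuclideanSpace ℝ (Fin n) → EuclideanSpace ℝ (Fin n))
    (hgradx : ∀ x y, HasGradientAt (fun x' => f x' y) (Fx x y) x)
    (hgrady : ∀ x y, HasGradientAt (fun y' => f x y') (Fy x y) y)
    (hscx : ∀ y x x', f x y - f x' y - ⟪Fx x' y, x - x'⟫ ≥ μ / 2 * ‖x - x'‖ ^ 2)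
    (hsmx : ∀ y x x', ‖Fx x y - Fx x' y‖ ≤ L * ‖x - x'‖)
    (hscy : ∀ x y y', (-f x y) - (-f x y') - ⟪-Fy x y', y - y'⟫ ≥ μ / 2 * ‖y - y'‖ ^ 2)
    (hsmy : ∀ x y y', ‖Fy x y - Fy x y'‖ ≤ L * ‖y - y'‖)
    (hlxy : ∀ x y y', ‖Fx x y - Fx x y'‖ ≤ L * ‖y - y'‖)
    (hlyx : ∀ y x x', ‖Fy x y - Fy x' y‖ ≤ L * ‖x - x'‖)
    :
    ∀ (x x' : EuclideanSpace ℝ (Fin m)) (y y' : EuclideanSpace ℝ (Fin n)),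
      ⟪Fx x y - Fx x' y', x - x'⟫ + ⟪(-Fy x y) - (-Fy x' y'), y - y'⟫ ≥
        μ / (4 * L ^ 2) *
          (‖Fx x y - Fx x' y'‖ ^ 2 + ‖(-Fy x y) - (-Fy x' y')‖ ^ 2) := by
  intro x x' y y'
  have hL : 0 < L := lt_of_lt_of_le hμ hμL
  have a1 := hscx y x' x
  have a2 := hscx y' x x'
  have a3 := hscy x y' y
  have a4 := hscy x' y y'
  have ex : ‖x' - x‖ = ‖x - x'‖ := norm_sub_rev _ _
  have ey : ‖y' - y‖ = ‖y - y'‖ := norm_sub_rev _ _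
  rw [ex] at a1
  rw [ey] at a3
  have mono : ⟪Fx x y - Fx x' y', x - x'⟫ + ⟪(-Fy x y) - (-Fy x' y'), y - y'⟫ ≥
      μ * (‖x - x'‖ ^ 2 + ‖y - y'‖ ^ 2) := by
    simp only [inner_sub_left, inner_sub_right, inner_neg_left] at *
    linarith
  have b1 : ‖Fx x y - Fx x' y'‖ ≤ L * (‖x - x'‖ + ‖y - y'‖) := by
    have := norm_sub_le_norm_sub_add_norm_sub (Fx x y) (Fx x' y) (Fx x' y')
    linarith [hsmx y x x', hlxy x' y y']
  have b2 : ‖(-Fy x y) - (-Fy x' y')‖ ≤ L * (‖x - x'‖ + ‖y - y'‖) := by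
    have e : (-Fy x y) - (-Fy x' y') = -(Fy x y - Fy x' y') := by abel
    rw [e, norm_neg]
    have := norm_sub_le_norm_sub_add_norm_sub (Fy x y) (Fy x' y) (Fy x' y')
    linarith [hlyx y x x', hsmy x' y y']
  have c1 := pow_le_pow_left₀ (norm_nonneg _) b1 2
  have c2 := pow_le_pow_left₀ (norm_nonneg _) b2 2
  have d : (L * (‖x - x'‖ + ‖y - y'‖)) ^ 2 ≤ 2 * L ^ 2 * (‖x - x'‖ ^ 2 + ‖y - y'‖ ^ 2) := by
    nlinarith [sq_nonneg (L * (‖x - x'‖ - ‖y - y'‖))]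
  calc _ ≤ μ / (4 * L ^ 2) * (4 * L ^ 2 * (‖x - x'‖ ^ 2 + ‖y - y'‖ ^ 2)) := by
        apply mul_le_mul_of_nonneg_left _ (by positivity)
        linarith
    _ = μ * (‖x - x'‖ ^ 2 + ‖y - y'‖ ^ 2) := by field_simp
    _ ≤ _ := mono
end
end

section
/- For every z ∈ ℝ^m × ℝ^n, the following quadratic inequality holds: μ‖z − z*‖² − 2⟨z − z*, Φ(z)⟩ + (μ/(4L²))‖Φ(z)‖² ≤ 0. -/
open MeasureTheory ProbabilityTheory Real
open scoped RealInnerProductSpace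

noncomputable section

/-- Corollary 1: quadratic inequality at the saddle point. -/
theorem stmt4 {m n : ℕ}
    (μ L : ℝ) (hμ : 0 < μ) (hμL : μ ≤ L)
    (f : EuclideanSpace ℝ (Fin m) → EuclideanSpace ℝ (Fin n) → ℝ)
    (Fx : EuclideanSpace ℝ (Fin m) → EuclideanSpace ℝ (Fin n) → EuclideanSpace ℝ (Fin m))
    (Fy : EuclideanSpace ℝ (Fin m) → EuclideanSpace ℝ (Fin n) → EuclideanSpace ℝ (Fin n))
    (hgradx : ∀ x y, HasGradientAt (fun x' => f x' y) (Fx x y) x)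
    (hgrady : ∀ x y, HasGradientAt (fun y' => f x y') (Fy x y) y)
    (hscx : ∀ y x x', f x y - f x' y - ⟪Fx x' y, x - x'⟫ ≥ μ / 2 * ‖x - x'‖ ^ 2)
    (hsmx : ∀ y x x', ‖Fx x y - Fx x' y‖ ≤ L * ‖x - x'‖)
    (hscy : ∀ x y y', (-f x y) - (-f x y') - ⟪-Fy x y', y - y'⟫ ≥ μ / 2 * ‖y - y'‖ ^ 2)
    (hsmy : ∀ x y y', ‖Fy x y - Fy x y'‖ ≤ L * ‖y - y'‖)
    (hlxy : ∀ x y y', ‖Fx x y - Fx x y'‖ ≤ L * ‖y - y'‖)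
    (hlyx : ∀ y x x', ‖Fy x y - Fy x' y‖ ≤ L * ‖x - x'‖)
    (xs : EuclideanSpace ℝ (Fin m)) (ys : EuclideanSpace ℝ (Fin n))
    (hxs : Fx xs ys = 0) (hys : Fy xs ys = 0)
    :
    ∀ (x : EuclideanSpace ℝ (Fin m)) (y : EuclideanSpace ℝ (Fin n)),
      μ * (‖x - xs‖ ^ 2 + ‖y - ys‖ ^ 2) -
        2 * (⟪x - xs, Fx x y⟫ + ⟪y - ys, -Fy x y⟫) +
        μ / (4 * L ^ 2) * (‖Fx x y‖ ^ 2 + ‖Fy x y‖ ^ 2) ≤ 0 := by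
  intro x y
  have hL : 0 < L := lt_of_lt_of_le hμ hμL
  have h1 := hscx y xs x
  have h2 := hscy x ys y
  have h3 := hscx ys x xs
  have h4 := hscy xs y ys
  rw [hxs, inner_zero_left] at h3
  rw [hys, neg_zero, inner_zero_left] at h4
  have e1 : ⟪Fx x y, xs - x⟫ = -⟪x - xs, Fx x y⟫ := by
    rw [← neg_sub x xs, inner_neg_right, real_inner_comm]
  have e2 : ⟪-Fy x y, ys - y⟫ = -⟪y - ys, -Fy x y⟫ := by
    rw [← neg_sub y ys, inner_neg_right, real_inner_comm]
  rw [e1, norm_sub_rev] at h1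
  rw [e2, norm_sub_rev] at h2
  have k1 : ‖Fx x y‖ ≤ L * (‖x - xs‖ + ‖y - ys‖) := by
    have t := norm_add_le (Fx x y - Fx xs y) (Fx xs y - Fx xs ys)
    rw [sub_add_sub_cancel, hxs, sub_zero] at t
    have a := hsmx y x xs
    have b := hlxy xs y ys
    rw [hxs] at b
    linarith
  have k2 : ‖Fy x y‖ ≤ L * (‖x - xs‖ + ‖y - ys‖) := by
    have t := norm_add_le (Fy x y - Fy xs y) (Fy xs y - Fy xs ys)
    rw [sub_add_sub_cancel, hys, sub_zero] at t
    have a := hlyx y x xs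
    have b := hsmy xs y ys
    rw [hys] at b
    linarith
  have q1 := pow_le_pow_left₀ (norm_nonneg _) k1 2
  have q2 := pow_le_pow_left₀ (norm_nonneg _) k2 2
  have q : ‖Fx x y‖ ^ 2 + ‖Fy x y‖ ^ 2 ≤ 4 * L ^ 2 * (‖x - xs‖ ^ 2 + ‖y - ys‖ ^ 2) := by
    nlinarith [sq_nonneg (L * (‖x - xs‖ - ‖y - ys‖))]
  have r : μ / (4 * L ^ 2) * (‖Fx x y‖ ^ 2 + ‖Fy x y‖ ^ 2)
      ≤ μ * (‖x - xs‖ ^ 2 + ‖y - ys‖ ^ 2) := by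
    calc _ ≤ μ / (4 * L ^ 2) * (4 * L ^ 2 * (‖x - xs‖ ^ 2 + ‖y - ys‖ ^ 2)) := by gcongr
      _ = _ := by field_simp
  linarith
end
end

section
/- For every stepsize α > 0, the deterministic GDA iterates on the quadratic saddle function satisfy, for every k ≥ 0, x_{k+1}² + y_{k+1}² ≥ (1 − 1/κ²)(x_k² + y_k²). -/
open MeasureTheory ProbabilityTheory Real
open scoped RealInnerProductSpace

noncomputable section

/-- Example 1(i): deterministic GDA on `f(x,y) = (μ/2)x² + Lxy − (μ/2)y²`
contracts no faster than `1 − 1/κ²` per step, where `κ = L/μ`. -/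
theorem stmt8 (μ L : ℝ) (hμ : 0 < μ) (hμL : μ ≤ L) (α : ℝ) (hα : 0 < α)
    (x y : ℕ → ℝ)
    (hx : ∀ k, x (k + 1) = x k - α * (μ * x k + L * y k))
    (hy : ∀ k, y (k + 1) = y k + α * (L * x k - μ * y k)) :
    ∀ k, x (k + 1) ^ 2 + y (k + 1) ^ 2 ≥
      (1 - 1 / (L / μ) ^ 2) * (x k ^ 2 + y k ^ 2) := by
  intro k
  have hL : L ≠ 0 := (lt_of_lt_of_le hμ hμL).ne'
  have h1 : 1 / (L / μ) ^ 2 = (μ / L) ^ 2 := by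
    rw [div_pow, div_pow, one_div_div]
  have h2 : x (k + 1) ^ 2 + y (k + 1) ^ 2 - (1 - (μ / L) ^ 2) * (x k ^ 2 + y k ^ 2)
      = ((α * L - μ / L) ^ 2 + (α * μ) ^ 2) * (x k ^ 2 + y k ^ 2) := by
    rw [hx, hy]
    field_simp
    ring
  have h3 : 0 ≤ ((α * L - μ / L) ^ 2 + (α * μ) ^ 2) * (x k ^ 2 + y k ^ 2) := by positivity
  rw [h1]
  linarith
end
end
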